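/- arXiv:2211.07153 — 3 statements merged into one kernel-verified Lean document; each statement's English description precedes it below -/
import Mathlib

section
/- Let C, D > 0 and let f(ρ,η) = C·ρ²(1−ρ)² + D·[ρ² + 6(1−ρ)(η² + (1−η)²) − 4(2−ρ)(η³ + (1−η)³) + 3(η² + (1−η)²)²]. Then for every α > max(C − 2D, 12D), the function g_α(ρ,η) = f(ρ,η) + (α/2)(ρ² + η²) has positive definite Hessian at every point of ℝ², and hence is strictly convex on ℝ². In particular assumption (A4) holds for the potential of Example 2.2. -/
noncomputable section

/-- The potential of Example 2.2. -/
def fEx (C D ρ η : ℝ) : ℝ :=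
  C * ρ ^ 2 * (1 - ρ) ^ 2 +
    D * (ρ ^ 2 + 6 * (1 - ρ) * (η ^ 2 + (1 - η) ^ 2)
      - 4 * (2 - ρ) * (η ^ 3 + (1 - η) ^ 3) + 3 * (η ^ 2 + (1 - η) ^ 2) ^ 2)

/-- The regularized potential `g_α(ρ,η) = f(ρ,η) + (α/2)(ρ² + η²)`. -/
def gEx (C D α ρ η : ℝ) : ℝ := fEx C D ρ η + α / 2 * (ρ ^ 2 + η ^ 2)

/-- The potential decouples: completing squares around `1/2`. -/
lemma gEx_eq (C D α ρ η : ℝ) : gEx C D α ρ η =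
    C * (ρ - 1/2) ^ 4 + (α + 2 * D - C) / 2 * (ρ - 1/2) ^ 2 + (α / 2 - D) * (ρ - 1/2)
    + 12 * D * (η - 1/2) ^ 4 + (α - 12 * D) / 2 * (η - 1/2) ^ 2 + α / 2 * (η - 1/2)
    + (C / 16 + D + α / 4) := by
  unfold gEx fEx; ring

lemma quartic_hasDerivAt (A B E F x : ℝ) :
    HasDerivAt (fun r : ℝ => A * (r - 1/2) ^ 4 + B * (r - 1/2) ^ 2 + E * (r - 1/2) + F)
      (4 * A * (x - 1/2) ^ 3 + 2 * B * (x - 1/2) + E) x := by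
  have h : HasDerivAt (fun r : ℝ => r - 1/2) 1 x := (hasDerivAt_id x).sub_const _
  refine HasDerivAt.congr_deriv (((((h.pow 4).const_mul A).add ((h.pow 2).const_mul B)).add
    (h.const_mul E)).add_const F) ?_
  norm_num
  ring

lemma cubic_hasDerivAt (A B E x : ℝ) :
    HasDerivAt (fun r : ℝ => 4 * A * (r - 1/2) ^ 3 + 2 * B * (r - 1/2) + E)
      (12 * A * (x - 1/2) ^ 2 + 2 * B) x := by
  have h : HasDerivAt (fun r : ℝ => r - 1/2) 1 x := (hasDerivAt_id x).sub_const _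
  refine HasDerivAt.congr_deriv ((((h.pow 3).const_mul (4 * A)).add (h.const_mul (2 * B))).add_const E) ?_
  norm_num
  ring

lemma deriv_rho (C D α ρ η : ℝ) : deriv (fun r => gEx C D α r η) ρ =
    4 * C * (ρ - 1/2) ^ 3 + 2 * ((α + 2 * D - C) / 2) * (ρ - 1/2) + (α / 2 - D) := by
  rw [← (quartic_hasDerivAt C ((α + 2 * D - C) / 2) (α / 2 - D)
    (12 * D * (η - 1/2) ^ 4 + (α - 12 * D) / 2 * (η - 1/2) ^ 2 + α / 2 * (η - 1/2)
    + (C / 16 + D + α / 4)) ρ).deriv]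
  congr 1
  funext r
  rw [gEx_eq]; ring

lemma deriv_eta (C D α ρ η : ℝ) : deriv (fun e => gEx C D α ρ e) η =
    4 * (12 * D) * (η - 1/2) ^ 3 + 2 * ((α - 12 * D) / 2) * (η - 1/2) + α / 2 := by
  rw [← (quartic_hasDerivAt (12 * D) ((α - 12 * D) / 2) (α / 2)
    (C * (ρ - 1/2) ^ 4 + (α + 2 * D - C) / 2 * (ρ - 1/2) ^ 2 + (α / 2 - D) * (ρ - 1/2)
    + (C / 16 + D + α / 4)) η).deriv]
  congr 1
  funext r
  rw [gEx_eq]; ring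

/-- Quantitative convexity of a one-variable quartic. -/
lemma quartic_conv (A B x y a b : ℝ) (hA : 0 ≤ A) (ha : 0 < a) (hb : 0 < b)
    (hab : a + b = 1) :
    A * (a * x + b * y - 1/2) ^ 4 + B * (a * x + b * y - 1/2) ^ 2 + B * (a * b * (x - y) ^ 2)
      ≤ a * (A * (x - 1/2) ^ 4 + B * (x - 1/2) ^ 2)
        + b * (A * (y - 1/2) ^ 4 + B * (y - 1/2) ^ 2) := by
  have h4 : (a * (x - 1/2) + b * (y - 1/2)) ^ 4 ≤ a * (x - 1/2) ^ 4 + b * (y - 1/2) ^ 4 := by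
    have := (Even.convexOn_pow (𝕜 := ℝ) (n := 4) (by decide)).2 (Set.mem_univ (x - 1/2))
      (Set.mem_univ (y - 1/2)) ha.le hb.le hab
    simpa only [smul_eq_mul] using this
  have h5 := mul_le_mul_of_nonneg_left h4 hA
  obtain rfl : b = 1 - a := by linarith
  have e : a * x + (1 - a) * y - 1/2 = a * (x - 1/2) + (1 - a) * (y - 1/2) := by ring
  rw [e]
  linarith

/-- for `C, D > 0` and `α > max(C − 2D, 12D)`, the function
`g_α = f + (α/2)(ρ²+η²)` has positive definite Hessian at every point of `ℝ²`
and is strictly convex on `ℝ²` (assumption (A4) for Example 2.2). -/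
theorem stmt3 (C D : ℝ) (hC : 0 < C) (hD : 0 < D) (α : ℝ)
    (hα : max (C - 2 * D) (12 * D) < α) :
    (∀ ρ η : ℝ, ∀ u v : ℝ, (u, v) ≠ (0, 0) →
      0 < deriv (fun r => deriv (fun r' => gEx C D α r' η) r) ρ * u ^ 2
          + 2 * deriv (fun e => deriv (fun r => gEx C D α r e) ρ) η * u * v
          + deriv (fun e => deriv (fun e' => gEx C D α ρ e') e) η * v ^ 2) ∧
    StrictConvexOn ℝ Set.univ (fun p : ℝ × ℝ => gEx C D α p.1 p.2) := by
  obtain ⟨h1, h2⟩ := max_lt_iff.1 hα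
  have hB1 : 0 < (α + 2 * D - C) / 2 := by linarith
  have hB2 : 0 < (α - 12 * D) / 2 := by linarith
  constructor
  · intro ρ η u v huv
    simp only [deriv_rho, deriv_eta]
    rw [(cubic_hasDerivAt _ _ _ _).deriv, (cubic_hasDerivAt _ _ _ _).deriv, deriv_const]
    have p1 : 0 < 12 * C * (ρ - 1/2) ^ 2 + 2 * ((α + 2 * D - C) / 2) := by positivity
    have p2 : 0 < 12 * (12 * D) * (η - 1/2) ^ 2 + 2 * ((α - 12 * D) / 2) := by positivity
    simp only [mul_zero, zero_mul, add_zero]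
    by_cases hu : u = 0
    · have hv : v ≠ 0 := fun hv => huv (by rw [hu, hv])
      positivity
    · positivity
  · refine ⟨convex_univ, ?_⟩
    rintro ⟨x, z⟩ - ⟨y, w⟩ - hne a b ha hb hab
    simp only [Prod.smul_mk, Prod.mk_add_mk, smul_eq_mul, gEx_eq]
    have q1 := quartic_conv C ((α + 2 * D - C) / 2) x y a b hC.le ha hb hab
    have q2 := quartic_conv (12 * D) ((α - 12 * D) / 2) z w a b (by positivity) ha hb hab
    have hpos : 0 < (α + 2 * D - C) / 2 * (a * b * (x - y) ^ 2)
        + (α - 12 * D) / 2 * (a * b * (z - w) ^ 2) := by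
      by_cases hxy : x = y
      · have hzw : z - w ≠ 0 := fun h => hne (by rw [hxy, sub_eq_zero.1 h])
        positivity
      · have hxy' : x - y ≠ 0 := sub_ne_zero.2 hxy
        positivity
    obtain rfl : b = 1 - a := by linarith
    linarith
end
end

section
/- Let d ≥ 1, γ_ρ, γ_η > 0, α > 0, and let f : ℝ² → ℝ be differentiable such that (ρ,η) ↦ f(ρ,η) + (α/4)(ρ² + η²) is convex on ℝ². Then for all smooth ℤ^d-periodic functions ρ, ρ̂, η, η̂ on ℝ^d: ‖ρ − ρ̂‖₁² + ‖η − η̂‖₁² ≤ C_E · E_α(ρ,η|ρ̂,η̂), where C_E = max(2/γ_ρ, 2/γ_η, 4/α) and E_α(ρ,η|ρ̂,η̂) = ∫_Ω (γ_ρ/2)|∇(ρ−ρ̂)|² + (γ_η/2)|∇(η−η̂)|² + (α/2)|ρ−ρ̂|² + (α/2)|η−η̂|² + f(ρ,η) − f(ρ̂,η̂) − ∂_ρ f(ρ̂,η̂)(ρ−ρ̂) − ∂_η f(ρ̂,η̂)(η−η̂) dx. -/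
noncomputable section
open MeasureTheory

/-- The periodicity cell `Ω = [0,1]^d`. -/
def cell (d : ℕ) : Set (Fin d → ℝ) := Set.Icc 0 1

/-- `ℤ^d`-periodicity of a function on `ℝ^d`. -/
def ZPeriodic {d : ℕ} (f : (Fin d → ℝ) → ℝ) : Prop :=
  ∀ (x : Fin d → ℝ) (k : Fin d → ℤ), f (x + fun i => (k i : ℝ)) = f x

/-- The gradient of a scalar field on `ℝ^d`. -/
def grad {d : ℕ} (f : (Fin d → ℝ) → ℝ) (x : Fin d → ℝ) : Fin d → ℝ :=
  fun i => fderiv ℝ f x (Pi.single i 1)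

/-- Squared `L²(Ω)` norm. -/
def l2sq {d : ℕ} (f : (Fin d → ℝ) → ℝ) : ℝ := ∫ x in cell d, (f x) ^ 2

/-- Squared `L²(Ω)` norm of a vector field. -/
def l2sqVec {d : ℕ} (F : (Fin d → ℝ) → Fin d → ℝ) : ℝ :=
  ∫ x in cell d, ∑ i, (F x i) ^ 2

/-- Squared `H¹(Ω)` norm, `‖f‖₁² = ‖f‖₀² + ‖∇f‖₀²`. -/
def h1sq {d : ℕ} (f : (Fin d → ℝ) → ℝ) : ℝ := l2sq f + l2sqVec (grad f)

/-- The relative energy functional `E_α(ρ,η|ρ̂,η̂)` (Bregman distance of the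
regularized energy). -/
def relE (d : ℕ) (γρ γη α : ℝ) (f : ℝ → ℝ → ℝ)
    (ρ η ρh ηh : (Fin d → ℝ) → ℝ) : ℝ :=
  ∫ x in cell d,
    γρ / 2 * ∑ i, (grad (fun y => ρ y - ρh y) x i) ^ 2
    + γη / 2 * ∑ i, (grad (fun y => η y - ηh y) x i) ^ 2
    + α / 2 * (ρ x - ρh x) ^ 2 + α / 2 * (η x - ηh x) ^ 2
    + f (ρ x) (η x) - f (ρh x) (ηh x)
    - deriv (fun r => f r (ηh x)) (ρh x) * (ρ x - ρh x)
    - deriv (fun e => f (ρh x) e) (ηh x) * (η x - ηh x)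

theorem convex_tangent {E : Type*} [NormedAddCommGroup E] [NormedSpace ℝ E] {g : E → ℝ}
    (hg : ConvexOn ℝ Set.univ g) {q : E} {g' : E →L[ℝ] ℝ} (h : HasFDerivAt g g' q) (v : E) :
    g' v ≤ g (q + v) - g q := by
  have hc : ConvexOn ℝ Set.univ (fun t : ℝ => g (q + t • v)) := by
    refine ⟨convex_univ, ?_⟩
    intro x _ y _ a b ha hb hab
    have := hg.2 (Set.mem_univ (q + x • v)) (Set.mem_univ (q + y • v)) ha hb hab
    have e : q + (a • x + b • y) • v = a • (q + x • v) + b • (q + y • v) := by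
      have : q = (a + b) • q := by rw [hab, one_smul]
      rw [smul_add, smul_add, add_smul, smul_assoc, smul_assoc]
      nth_rewrite 1 [this]
      rw [add_smul]
      abel
    simp only [e]
    exact this
  have hd : HasDerivAt (fun t : ℝ => g (q + t • v)) (g' v) 0 := by
    have h1 : HasDerivAt (fun t : ℝ => q + t • v) v 0 := by
      simpa using ((hasDerivAt_id (0:ℝ)).smul_const v).const_add q
    have h0 : HasFDerivAt g g' (q + (0:ℝ) • v) := by simpa using h
    exact h0.comp_hasDerivAt 0 h1
  have := hc.le_slope_of_hasDerivAt (Set.mem_univ (0:ℝ)) (Set.mem_univ (1:ℝ)) one_pos hd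
  simpa [slope_def_field] using this

theorem bregman_bounds (α : ℝ) (f : ℝ → ℝ → ℝ)
    (hf : Differentiable ℝ (fun p : ℝ × ℝ => f p.1 p.2))
    (hconv : ConvexOn ℝ Set.univ
      (fun p : ℝ × ℝ => f p.1 p.2 + α / 4 * (p.1 ^ 2 + p.2 ^ 2))) (a b u v : ℝ) :
    fderiv ℝ (fun p : ℝ × ℝ => f p.1 p.2) (a, b) (u, v) + α / 4 * (2 * a * u + 2 * b * v)
      ≤ f (a + u) (b + v) + α / 4 * ((a + u) ^ 2 + (b + v) ^ 2)
        - (f a b + α / 4 * (a ^ 2 + b ^ 2)) := by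
  have h1 : HasFDerivAt (fun p : ℝ × ℝ => p.1) (ContinuousLinearMap.fst ℝ ℝ ℝ) (a, b) :=
    hasFDerivAt_fst
  have h2 : HasFDerivAt (fun p : ℝ × ℝ => p.2) (ContinuousLinearMap.snd ℝ ℝ ℝ) (a, b) :=
    hasFDerivAt_snd
  have h := convex_tangent hconv
    ((hf (a, b)).hasFDerivAt.add (((h1.pow 2).add (h2.pow 2)).const_mul (α / 4))) (u, v)
  simp at h
  linarith

theorem partials (f : ℝ → ℝ → ℝ)
    (hf : Differentiable ℝ (fun p : ℝ × ℝ => f p.1 p.2)) (a b u v : ℝ) :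
    deriv (fun r => f r b) a * u + deriv (fun e => f a e) b * v
      = fderiv ℝ (fun p : ℝ × ℝ => f p.1 p.2) (a, b) (u, v) := by
  have h := (hf (a, b)).hasFDerivAt
  have h1 : HasDerivAt (fun r => f r b)
      (fderiv ℝ (fun p : ℝ × ℝ => f p.1 p.2) (a, b) (1, 0)) a :=
    HasFDerivAt.comp_hasDerivAt (f := fun r : ℝ => ((r, b) : ℝ × ℝ)) a h
      ((hasDerivAt_id a).prodMk (hasDerivAt_const a b))
  have h2 : HasDerivAt (fun e => f a e)
      (fderiv ℝ (fun p : ℝ × ℝ => f p.1 p.2) (a, b) (0, 1)) b :=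
    HasFDerivAt.comp_hasDerivAt (f := fun e : ℝ => ((a, e) : ℝ × ℝ)) b h
      ((hasDerivAt_const b a).prodMk (hasDerivAt_id b))
  rw [h1.deriv, h2.deriv]
  have e : ((u, v) : ℝ × ℝ) = u • ((1, 0) : ℝ × ℝ) + v • ((0, 1) : ℝ × ℝ) := by simp
  rw [e, map_add, map_smul, map_smul, smul_eq_mul, smul_eq_mul]
  ring

theorem grad_sq_cont {d : ℕ} {w : (Fin d → ℝ) → ℝ} (hw : ContDiff ℝ (⊤ : ℕ∞) w) :
    Continuous (fun x => ∑ i, (grad w x i) ^ 2) := by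
  have := hw.continuous_fderiv (by simp)
  unfold grad
  fun_prop

/-- first estimate of Lemma 5.1: coercivity of the relative
energy, `‖ρ−ρ̂‖₁² + ‖η−η̂‖₁² ≤ C_E · E_α(ρ,η|ρ̂,η̂)` with
`C_E = max(2/γ_ρ, 2/γ_η, 4/α)`. -/
theorem stmt5 (d : ℕ) (hd : 1 ≤ d) (γρ γη α : ℝ)
    (hγρ : 0 < γρ) (hγη : 0 < γη) (hα : 0 < α)
    (f : ℝ → ℝ → ℝ) (hf : Differentiable ℝ (fun p : ℝ × ℝ => f p.1 p.2))
    (hconv : ConvexOn ℝ Set.univ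
      (fun p : ℝ × ℝ => f p.1 p.2 + α / 4 * (p.1 ^ 2 + p.2 ^ 2)))
    (ρ ρh η ηh : (Fin d → ℝ) → ℝ)
    (hρ : ContDiff ℝ (⊤ : ℕ∞) ρ) (hρh : ContDiff ℝ (⊤ : ℕ∞) ρh)
    (hη : ContDiff ℝ (⊤ : ℕ∞) η) (hηh : ContDiff ℝ (⊤ : ℕ∞) ηh)
    (pρ : ZPeriodic ρ) (pρh : ZPeriodic ρh)
    (pη : ZPeriodic η) (pηh : ZPeriodic ηh) :
    h1sq (fun x => ρ x - ρh x) + h1sq (fun x => η x - ηh x)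
      ≤ max (2 / γρ) (max (2 / γη) (4 / α)) * relE d γρ γη α f ρ η ρh ηh := by
  have hFc : Continuous (fun p : ℝ × ℝ => f p.1 p.2) := hf.continuous
  have cρ := hρ.continuous
  have cρh := hρh.continuous
  have cη := hη.continuous
  have cηh := hηh.continuous
  have hcomp : ∀ u v : (Fin d → ℝ) → ℝ, Continuous u → Continuous v →
      Continuous (fun x => f (u x) (v x)) := fun u v hu hv => hFc.comp (hu.prodMk hv)
  have hK : IsCompact (cell d) := isCompact_Icc
  have hint : ∀ u : (Fin d → ℝ) → ℝ, Continuous u → IntegrableOn u (cell d) :=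
    fun u hu => hu.continuousOn.integrableOn_compact hK
  -- convexity defect
  set B : (Fin d → ℝ) → ℝ := fun x =>
    f (ρ x) (η x) - f (ρh x) (ηh x)
    - fderiv ℝ (fun p : ℝ × ℝ => f p.1 p.2) (ρh x, ηh x) (ρ x - ρh x, η x - ηh x)
    + α / 4 * ((ρ x - ρh x) ^ 2 + (η x - ηh x) ^ 2) with hB
  set U : (Fin d → ℝ) → ℝ := fun x =>
    f (ρ x) (η x) - 2 * f (ρh x) (ηh x) + f (2 * ρh x - ρ x) (2 * ηh x - η x)
    + α / 2 * ((ρ x - ρh x) ^ 2 + (η x - ηh x) ^ 2) with hU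
  have hB0 : ∀ x, 0 ≤ B x := by
    intro x
    have h := bregman_bounds α f hf hconv (ρh x) (ηh x) (ρ x - ρh x) (η x - ηh x)
    rw [add_sub_cancel, add_sub_cancel] at h
    simp only [hB]
    linarith
  have hBU : ∀ x, B x ≤ U x := by
    intro x
    have h := bregman_bounds α f hf hconv (ρh x) (ηh x) (-(ρ x - ρh x)) (-(η x - ηh x))
    have e : ((-(ρ x - ρh x), -(η x - ηh x)) : ℝ × ℝ) = -(ρ x - ρh x, η x - ηh x) := rfl
    have e1 : ρh x + -(ρ x - ρh x) = 2 * ρh x - ρ x := by ring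
    have e2 : ηh x + -(η x - ηh x) = 2 * ηh x - η x := by ring
    rw [e, map_neg, e1, e2] at h
    simp only [hB, hU]
    linarith
  have hUc : Continuous U := by
    have h1 := hcomp ρ η cρ cη
    have h2 := hcomp ρh ηh cρh cηh
    have h3 := hcomp (fun x => 2 * ρh x - ρ x) (fun x => 2 * ηh x - η x)
      (by fun_prop) (by fun_prop)
    simp only [hU]
    fun_prop
  have hBm : Measurable B := by
    have h1 := (hcomp ρ η cρ cη).measurable
    have h2 := (hcomp ρh ηh cρh cηh).measurable
    have hL : ∀ w : ℝ × ℝ, Measurable (fun x =>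
        fderiv ℝ (fun p : ℝ × ℝ => f p.1 p.2) (ρh x, ηh x) w) := fun w =>
      (measurable_fderiv_apply_const ℝ (fun p : ℝ × ℝ => f p.1 p.2) w).comp
        (cρh.prodMk cηh).measurable
    have h3 : Measurable (fun x => fderiv ℝ (fun p : ℝ × ℝ => f p.1 p.2) (ρh x, ηh x)
        (ρ x - ρh x, η x - ηh x)) := by
      have e : (fun x => fderiv ℝ (fun p : ℝ × ℝ => f p.1 p.2) (ρh x, ηh x)
          (ρ x - ρh x, η x - ηh x)) = fun x =>
          (ρ x - ρh x) * fderiv ℝ (fun p : ℝ × ℝ => f p.1 p.2) (ρh x, ηh x) (1, 0)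
          + (η x - ηh x) * fderiv ℝ (fun p : ℝ × ℝ => f p.1 p.2) (ρh x, ηh x) (0, 1) := by
        funext x
        rw [← smul_eq_mul, ← smul_eq_mul, ← map_smul, ← map_smul, ← map_add]
        simp
      rw [e]
      exact ((cρ.sub cρh).measurable.mul (hL _)).add ((cη.sub cηh).measurable.mul (hL _))
    have h4 : Measurable (fun x => α / 4 * ((ρ x - ρh x) ^ 2 + (η x - ηh x) ^ 2)) :=
      Continuous.measurable (by fun_prop)
    exact ((h1.sub h2).sub h3).add h4
  have hBi : IntegrableOn B (cell d) := by
    refine Integrable.mono' (hint U hUc) hBm.aestronglyMeasurable (Filter.Eventually.of_forall ?_)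
    intro x
    rw [Real.norm_eq_abs, abs_of_nonneg (hB0 x)]
    exact hBU x
  have gρ := grad_sq_cont (hρ.sub hρh)
  have gη := grad_sq_cont (hη.sub hηh)
  have sρ : Continuous (fun x => (ρ x - ρh x) ^ 2) := by fun_prop
  have sη : Continuous (fun x => (η x - ηh x) ^ 2) := by fun_prop
  set Gρ : (Fin d → ℝ) → ℝ := fun x => ∑ i, (grad (fun y => ρ y - ρh y) x i) ^ 2 with hGρ
  set Gη : (Fin d → ℝ) → ℝ := fun x => ∑ i, (grad (fun y => η y - ηh y) x i) ^ 2 with hGη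
  have cGρ : Continuous Gρ := gρ
  have cGη : Continuous Gη := gη
  have hrel : relE d γρ γη α f ρ η ρh ηh = ∫ x in cell d,
      ((γρ / 2 * Gρ x + γη / 2 * Gη x + α / 4 * (ρ x - ρh x) ^ 2 + α / 4 * (η x - ηh x) ^ 2)
        + B x) := by
    unfold relE
    congr 1
    funext x
    have := partials f hf (ρh x) (ηh x) (ρ x - ρh x) (η x - ηh x)
    simp only [hB, hGρ, hGη]
    linarith
  have hlhs : h1sq (fun x => ρ x - ρh x) + h1sq (fun x => η x - ηh x) = ∫ x in cell d,
      (((ρ x - ρh x) ^ 2 + Gρ x) + ((η x - ηh x) ^ 2 + Gη x)) := by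
    rw [integral_add (hint _ (by fun_prop)) (hint _ (by fun_prop)),
      integral_add (hint _ sρ) (hint _ cGρ), integral_add (hint _ sη) (hint _ cGη)]
    rfl
  rw [hlhs, hrel, ← integral_const_mul]
  set C := max (2 / γρ) (max (2 / γη) (4 / α)) with hC
  have C1 : 1 ≤ C * (γρ / 2) := by
    have h : 2 / γρ ≤ C := le_max_left _ _
    rw [div_le_iff₀ hγρ] at h
    linarith
  have C2 : 1 ≤ C * (γη / 2) := by
    have h : 2 / γη ≤ C := (le_max_left _ _).trans (le_max_right _ _)
    rw [div_le_iff₀ hγη] at h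
    linarith
  have C3 : 1 ≤ C * (α / 4) := by
    have h : 4 / α ≤ C := (le_max_right _ _).trans (le_max_right _ _)
    rw [div_le_iff₀ hα] at h
    linarith
  have C0 : 0 ≤ C := le_trans (by positivity) (le_max_left _ _)
  refine integral_mono (hint _ (by fun_prop))
    (((hint _ (by fun_prop)).add hBi).const_mul C) ?_
  intro x
  have n1 : 0 ≤ Gρ x := Finset.sum_nonneg fun i _ => sq_nonneg _
  have n2 : 0 ≤ Gη x := Finset.sum_nonneg fun i _ => sq_nonneg _
  have m1 := mul_le_mul_of_nonneg_right C1 n1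
  have m2 := mul_le_mul_of_nonneg_right C2 n2
  have m3 := mul_le_mul_of_nonneg_right C3 (sq_nonneg (ρ x - ρh x))
  have m4 := mul_le_mul_of_nonneg_right C3 (sq_nonneg (η x - ηh x))
  have m5 := mul_nonneg C0 (hB0 x)
  show ((ρ x - ρh x) ^ 2 + Gρ x) + ((η x - ηh x) ^ 2 + Gη x) ≤ C *
      ((γρ / 2 * Gρ x + γη / 2 * Gη x + α / 4 * (ρ x - ρh x) ^ 2 + α / 4 * (η x - ηh x) ^ 2)
        + B x)
  linarith
end
end

section
/- Let L : ℝ^{2d+2} → ℝ^{(d+1)×(d+1)} be a smooth mobility function all of whose first partial derivatives are bounded in norm by C_L. Let ρ, η, ρ̂, η̂, μ̂_ρ, μ̂_η be smooth ℤ^d-periodic functions on ℝ^d, write L = L(ρ,∇ρ,η,∇η), L̂ = L(ρ̂,∇ρ̂,η̂,∇η̂), and define r₁ := div((L̂₁₁ − L₁₁)∇μ̂_ρ + (L̂₁₂ − L₁₂)μ̂_η) and r₃ := (L₂₁ − L̂₂₁)·∇μ̂_ρ + (L₂₂ − L̂₂₂)μ̂_η. Then there exists a constant C > 0 depending only on C_L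 and d such that ‖r₁‖₋₁ + ‖r₃‖₀ ≤ C·( ‖∇μ̂_ρ‖_{L^∞(Ω)} + ‖μ̂_η‖_{L^∞(Ω)} )·( ‖ρ − ρ̂‖₁ + ‖η − η̂‖₁ ). -/
noncomputable section
open MeasureTheory

/-- The divergence of a vector field on `ℝ^d`. -/
def divg {d : ℕ} (F : (Fin d → ℝ) → Fin d → ℝ) (x : Fin d → ℝ) : ℝ :=
  ∑ i, fderiv ℝ (fun y => F y i) x (Pi.single i 1)

/-- Negative-order norm `‖r‖₋₁ = sup { ∫_Ω r v dx / ‖v‖₁ }`, the supremum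
being over nonzero smooth `ℤ^d`-periodic test functions. -/
def hneg1 {d : ℕ} (r : (Fin d → ℝ) → ℝ) : ℝ :=
  sSup { c | ∃ v : (Fin d → ℝ) → ℝ, ContDiff ℝ (⊤ : ℕ∞) v ∧ ZPeriodic v ∧ v ≠ 0 ∧
    c = (∫ x in cell d, r x * v x) / Real.sqrt (h1sq v) }

/-- `L^∞(Ω)` norm of a scalar field. -/
def supAbs {d : ℕ} (g : (Fin d → ℝ) → ℝ) : ℝ :=
  sSup { y | ∃ x ∈ cell d, y = |g x| }

/-- `L^∞(Ω)` norm of a vector field. -/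
def supNormVec {d : ℕ} (G : (Fin d → ℝ) → Fin d → ℝ) : ℝ :=
  sSup { y | ∃ x ∈ cell d, y = Real.sqrt (∑ i, (G x i) ^ 2) }

/-- The argument tuple `(ρ, ∇ρ, η, ∇η) ∈ ℝ^{2d+2}` of the mobility. -/
abbrev Args (d : ℕ) := ℝ × (Fin d → ℝ) × ℝ × (Fin d → ℝ)

/-- Mobility arguments `(ρ(x), ∇ρ(x), η(x), ∇η(x))`. -/
def mobArgs {d : ℕ} (ρ η : (Fin d → ℝ) → ℝ) (x : Fin d → ℝ) : Args d :=
  (ρ x, grad ρ x, η x, grad η x)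

/-- The residual `r₁ = div((L̂₁₁ − L₁₁)∇μ̂_ρ + (L̂₁₂ − L₁₂)μ̂_η)`. -/
def res1 {d : ℕ} (L : Args d → Matrix (Fin d ⊕ Unit) (Fin d ⊕ Unit) ℝ)
    (ρ η ρh ηh μρh μηh : (Fin d → ℝ) → ℝ) (x : Fin d → ℝ) : ℝ :=
  divg (fun y i =>
    (∑ j, (L (mobArgs ρh ηh y) (Sum.inl i) (Sum.inl j)
        - L (mobArgs ρ η y) (Sum.inl i) (Sum.inl j)) * grad μρh y j)
    + (L (mobArgs ρh ηh y) (Sum.inl i) (Sum.inr ())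
        - L (mobArgs ρ η y) (Sum.inl i) (Sum.inr ())) * μηh y) x

/-- The residual `r₃ = (L₂₁ − L̂₂₁)·∇μ̂_ρ + (L₂₂ − L̂₂₂)μ̂_η`. -/
def res3 {d : ℕ} (L : Args d → Matrix (Fin d ⊕ Unit) (Fin d ⊕ Unit) ℝ)
    (ρ η ρh ηh μρh μηh : (Fin d → ℝ) → ℝ) (x : Fin d → ℝ) : ℝ :=
  (∑ i, (L (mobArgs ρ η x) (Sum.inr ()) (Sum.inl i)
      - L (mobArgs ρh ηh x) (Sum.inr ()) (Sum.inl i)) * grad μρh x i)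
  + (L (mobArgs ρ η x) (Sum.inr ()) (Sum.inr ())
      - L (mobArgs ρh ηh x) (Sum.inr ()) (Sum.inr ())) * μηh x

theorem grad_contDiff {d : ℕ} {f : (Fin d → ℝ) → ℝ} (hf : ContDiff ℝ (⊤ : ℕ∞) f) (i : Fin d) :
    ContDiff ℝ (⊤ : ℕ∞) (fun x => grad f x i) := by
  unfold grad
  exact (hf.fderiv_right (m := (⊤ : ℕ∞)) (by simp)).clm_apply contDiff_const

theorem grad_periodic {d : ℕ} {f : (Fin d → ℝ) → ℝ} (hf : ZPeriodic f)
    (x : Fin d → ℝ) (k : Fin d → ℤ) :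
    grad f (x + fun i => (k i : ℝ)) = grad f x := by
  funext i
  unfold grad
  rw [← fderiv_comp_add_right]
  congr 2
  funext y
  exact hf y k

theorem mobArgs_contDiff {d : ℕ} {ρ η : (Fin d → ℝ) → ℝ} (hρ : ContDiff ℝ (⊤ : ℕ∞) ρ)
    (hη : ContDiff ℝ (⊤ : ℕ∞) η) : ContDiff ℝ (⊤ : ℕ∞) (mobArgs ρ η) := by
  unfold mobArgs
  exact hρ.prodMk ((contDiff_pi.2 fun i => grad_contDiff hρ i).prodMk
    (hη.prodMk (contDiff_pi.2 fun i => grad_contDiff hη i)))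

theorem mobArgs_periodic {d : ℕ} {ρ η : (Fin d → ℝ) → ℝ} (hρ : ZPeriodic ρ) (hη : ZPeriodic η)
    (x : Fin d → ℝ) (k : Fin d → ℤ) :
    mobArgs ρ η (x + fun i => (k i : ℝ)) = mobArgs ρ η x := by
  unfold mobArgs
  rw [hρ, hη, grad_periodic hρ, grad_periodic hη]

theorem grad_sub' {d : ℕ} {f g : (Fin d → ℝ) → ℝ} (hf : ContDiff ℝ (⊤ : ℕ∞) f)
    (hg : ContDiff ℝ (⊤ : ℕ∞) g) (x : Fin d → ℝ) (i : Fin d) :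
    grad (fun x => f x - g x) x i = grad f x i - grad g x i := by
  unfold grad
  rw [fderiv_fun_sub (hf.differentiable (by simp) x) (hg.differentiable (by simp) x)]
  rfl

theorem int_cell {d : ℕ} {f : (Fin d → ℝ) → ℝ} (hf : Continuous f) :
    IntegrableOn f (cell d) := hf.integrableOn_Icc

/-- The divergence of a periodic field integrates to zero. -/
theorem div_zero_int {d : ℕ} (hd : 1 ≤ d) (G : Fin d → (Fin d → ℝ) → ℝ)
    (hG : ∀ i, ContDiff ℝ (⊤ : ℕ∞) (G i)) (hp : ∀ i, ZPeriodic (G i)) :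
    ∫ x in cell d, ∑ i, fderiv ℝ (G i) x (Pi.single i 1) = 0 := by
  obtain ⟨n, rfl⟩ : ∃ n, d = n + 1 := ⟨d - 1, by omega⟩
  unfold cell
  have hcont : Continuous (fun x => ∑ i, fderiv ℝ (G i) x (Pi.single i 1)) :=
    continuous_finsetSum _ fun i _ => (grad_contDiff (hG i) i).continuous
  rw [integral_divergence_of_hasFDerivAt_off_countable' (E := ℝ) 0 1 zero_le_one G
    (fun i x => fderiv ℝ (G i) x) ∅ Set.countable_empty
    (fun i => (hG i).continuous.continuousOn)
    (fun x _ i => ((hG i).differentiable (by simp) x).hasFDerivAt)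
    hcont.integrableOn_Icc]
  apply Finset.sum_eq_zero
  intro i _
  rw [sub_eq_zero]
  apply integral_congr_ae
  refine Filter.Eventually.of_forall fun x => ?_
  have := hp i (i.insertNth 0 x) (Pi.single i 1)
  simp only [Pi.zero_apply, Pi.one_apply]
  rw [← this]
  congr 1
  funext j
  refine Fin.succAboveCases i ?_ (fun j => ?_) j <;> simp

theorem sq_le_of_quad {A B V : ℝ} (h : ∀ t : ℝ, 2 * t * B ≤ t ^ 2 * A + V) : B ^ 2 ≤ A * V := by
  have := discrim_le_zero (a := A) (b := -2 * B) (c := V) (fun t => by nlinarith [h t])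
  unfold discrim at this
  nlinarith

theorem l2sq_nonneg' {d : ℕ} (f : (Fin d → ℝ) → ℝ) : 0 ≤ l2sq f :=
  integral_nonneg fun _ => sq_nonneg _

theorem l2sqVec_nonneg' {d : ℕ} (f : (Fin d → ℝ) → Fin d → ℝ) : 0 ≤ l2sqVec f :=
  integral_nonneg fun _ => Finset.sum_nonneg fun _ _ => sq_nonneg _

theorem h1sq_nonneg' {d : ℕ} (f : (Fin d → ℝ) → ℝ) : 0 ≤ h1sq f :=
  add_nonneg (l2sq_nonneg' f) (l2sqVec_nonneg' _)

/-- pointwise density of the squared `H¹` norm -/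
def dens {d : ℕ} (f : (Fin d → ℝ) → ℝ) (x : Fin d → ℝ) : ℝ := f x ^ 2 + ∑ i, grad f x i ^ 2

theorem dens_cont {d : ℕ} {f : (Fin d → ℝ) → ℝ} (hf : ContDiff ℝ (⊤ : ℕ∞) f) :
    Continuous (dens f) := by
  unfold dens
  exact (hf.continuous.pow 2).add
    (continuous_finsetSum _ fun i _ => (grad_contDiff hf i).continuous.pow 2)

theorem h1sq_eq {d : ℕ} {f : (Fin d → ℝ) → ℝ} (hf : ContDiff ℝ (⊤ : ℕ∞) f) :
    h1sq f = ∫ x in cell d, dens f x := by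
  unfold h1sq l2sq l2sqVec dens
  rw [integral_add]
  · exact int_cell (hf.continuous.pow 2)
  · exact int_cell (continuous_finsetSum _ fun i _ => (grad_contDiff hf i).continuous.pow 2)

theorem dens_nonneg {d : ℕ} (f : (Fin d → ℝ) → ℝ) (x) : 0 ≤ dens f x :=
  add_nonneg (sq_nonneg _) (Finset.sum_nonneg fun _ _ => sq_nonneg _)

theorem args_bound {d : ℕ} {ρ η ρh ηh : (Fin d → ℝ) → ℝ}
    (h1 : ContDiff ℝ (⊤ : ℕ∞) ρ) (h2 : ContDiff ℝ (⊤ : ℕ∞) η)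
    (h3 : ContDiff ℝ (⊤ : ℕ∞) ρh) (h4 : ContDiff ℝ (⊤ : ℕ∞) ηh) (x : Fin d → ℝ) :
    ‖mobArgs ρ η x - mobArgs ρh ηh x‖ ≤
      Real.sqrt (dens (fun x => ρ x - ρh x) x + dens (fun x => η x - ηh x) x) := by
  have key : ∀ {f g : (Fin d → ℝ) → ℝ}, ContDiff ℝ (⊤ : ℕ∞) f → ContDiff ℝ (⊤ : ℕ∞) g →
      |f x - g x| ≤ Real.sqrt (dens (fun x => f x - g x) x) ∧
      ‖grad f x - grad g x‖ ≤ Real.sqrt (dens (fun x => f x - g x) x) := by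
    intro f g hf hg
    have hs : 0 ≤ ∑ i, grad (fun x => f x - g x) x i ^ 2 :=
      Finset.sum_nonneg fun _ _ => sq_nonneg _
    constructor
    · apply Real.abs_le_sqrt
      unfold dens
      linarith
    · rw [pi_norm_le_iff_of_nonneg (Real.sqrt_nonneg _)]
      intro i
      rw [Real.norm_eq_abs, Pi.sub_apply, ← grad_sub' hf hg]
      apply Real.abs_le_sqrt
      have := Finset.single_le_sum (f := fun i => grad (fun x => f x - g x) x i ^ 2)
        (fun _ _ => sq_nonneg _) (Finset.mem_univ i)
      unfold dens
      nlinarith [sq_nonneg (f x - g x)]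
  have ha := key h1 h3
  have hb := key h2 h4
  have m1 : Real.sqrt (dens (fun x => ρ x - ρh x) x) ≤
    Real.sqrt (dens (fun x => ρ x - ρh x) x + dens (fun x => η x - ηh x) x) :=
    Real.sqrt_le_sqrt (by linarith [dens_nonneg (fun x => η x - ηh x) x])
  have m2 : Real.sqrt (dens (fun x => η x - ηh x) x) ≤
    Real.sqrt (dens (fun x => ρ x - ρh x) x + dens (fun x => η x - ηh x) x) :=
    Real.sqrt_le_sqrt (by linarith [dens_nonneg (fun x => ρ x - ρh x) x])
  unfold mobArgs
  simp only [Prod.mk_sub_mk, Prod.norm_mk, max_le_iff, Real.norm_eq_abs]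
  exact ⟨ha.1.trans m1, ha.2.trans m1, hb.1.trans m2, hb.2.trans m2⟩

theorem abs_le_supAbs {d : ℕ} {g : (Fin d → ℝ) → ℝ} (hg : Continuous g) {x} (hx : x ∈ cell d) :
    |g x| ≤ supAbs g := by
  refine le_csSup ?_ ⟨x, hx, rfl⟩
  have := (isCompact_Icc (a := (0 : Fin d → ℝ)) (b := 1)).bddAbove_image hg.abs.continuousOn
  refine this.mono ?_
  rintro y ⟨x, hx, rfl⟩
  exact ⟨x, hx, rfl⟩

theorem abs_le_supNormVec {d : ℕ} {g : (Fin d → ℝ) → Fin d → ℝ} (hg : ∀ i, Continuous fun x => g x i)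
    {x} (hx : x ∈ cell d) (i : Fin d) : |g x i| ≤ supNormVec g := by
  have h1 : |g x i| ≤ Real.sqrt (∑ i, (g x i) ^ 2) := by
    apply Real.abs_le_sqrt
    exact Finset.single_le_sum (f := fun i => g x i ^ 2)
        (fun _ _ => sq_nonneg _) (Finset.mem_univ i)
  refine h1.trans (le_csSup ?_ ⟨x, hx, rfl⟩)
  have hc : Continuous fun x => Real.sqrt (∑ i, (g x i) ^ 2) :=
    (continuous_finsetSum _ fun i _ => (hg i).pow 2).sqrt
  have := (isCompact_Icc (a := (0 : Fin d → ℝ)) (b := 1)).bddAbove_image hc.continuousOn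
  refine this.mono ?_
  rintro y ⟨x, hx, rfl⟩
  exact ⟨x, hx, rfl⟩

theorem supAbs_nonneg {d : ℕ} (g : (Fin d → ℝ) → ℝ) : 0 ≤ supAbs g :=
  Real.sSup_nonneg (by rintro y ⟨x, _, rfl⟩; exact abs_nonneg _)

theorem supNormVec_nonneg {d : ℕ} (g : (Fin d → ℝ) → Fin d → ℝ) : 0 ≤ supNormVec g :=
  Real.sSup_nonneg (by rintro y ⟨x, _, rfl⟩; exact Real.sqrt_nonneg _)

/-- algebraic bound for one row -/
theorem row_bound {d : ℕ} (a g : Fin d → ℝ) (b m D P Q : ℝ) (hD : 0 ≤ D) (hP : 0 ≤ P) (hQ : 0 ≤ Q)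
    (ha : ∀ j, |a j| ≤ D) (hb : |b| ≤ D) (hg : ∀ j, |g j| ≤ P) (hm : |m| ≤ Q) :
    |(∑ j, a j * g j) + b * m| ≤ D * ((d + 1) * (P + Q)) := by
  have h1 : |∑ j, a j * g j| ≤ d * (D * P) := by
    refine (Finset.abs_sum_le_sum_abs _ _).trans ?_
    refine (Finset.sum_le_card_nsmul _ _ (D * P) fun j _ => ?_).trans (by simp)
    rw [abs_mul]
    exact mul_le_mul (ha j) (hg j) (abs_nonneg _) hD
  have h2 : |b * m| ≤ D * Q := by
    rw [abs_mul]
    exact mul_le_mul hb hm (abs_nonneg _) hD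
  refine (abs_add_le _ _).trans ?_
  have : 0 ≤ (d : ℝ) * (D * Q) := by positivity
  have : 0 ≤ D * P := by positivity
  nlinarith

set_option maxHeartbeats 1000000

/-- residual bounds (6.2)–(6.3): for a smooth mobility with
first partial derivatives bounded by `C_L`, there is `C > 0` depending only on
`C_L` and `d` with
`‖r₁‖₋₁ + ‖r₃‖₀ ≤ C (‖∇μ̂_ρ‖_{L^∞} + ‖μ̂_η‖_{L^∞}) (‖ρ−ρ̂‖₁ + ‖η−η̂‖₁)`. -/
theorem stmt19 (d : ℕ) (hd : 1 ≤ d) (CL : ℝ) (hCL : 0 < CL) :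
    ∃ C : ℝ, 0 < C ∧
      ∀ L : Args d → Matrix (Fin d ⊕ Unit) (Fin d ⊕ Unit) ℝ,
        (∀ i j, ContDiff ℝ (⊤ : ℕ∞) fun q : Args d => L q i j) →
        (∀ (q : Args d) i j, ‖fderiv ℝ (fun p => L p i j) q‖ ≤ CL) →
        ∀ ρ η ρh ηh μρh μηh : (Fin d → ℝ) → ℝ,
          ContDiff ℝ (⊤ : ℕ∞) ρ → ContDiff ℝ (⊤ : ℕ∞) η →
          ContDiff ℝ (⊤ : ℕ∞) ρh → ContDiff ℝ (⊤ : ℕ∞) ηh →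
          ContDiff ℝ (⊤ : ℕ∞) μρh → ContDiff ℝ (⊤ : ℕ∞) μηh →
          ZPeriodic ρ → ZPeriodic η →
          ZPeriodic ρh → ZPeriodic ηh →
          ZPeriodic μρh → ZPeriodic μηh →
          hneg1 (res1 L ρ η ρh ηh μρh μηh)
              + Real.sqrt (l2sq (res3 L ρ η ρh ηh μρh μηh))
            ≤ C * (supNormVec (grad μρh) + supAbs μηh)
              * (Real.sqrt (h1sq fun x => ρ x - ρh x)
                + Real.sqrt (h1sq fun x => η x - ηh x)) := by
  refine ⟨CL * (d + 1) * (d + 1), by positivity, ?_⟩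
  intro L hL hL' ρ η ρh ηh μρ μη h1 h2 h3 h4 h5 h6 p1 p2 p3 p4 p5 p6
  set S := supNormVec (grad μρ) + supAbs μη with hS
  have hS0 : 0 ≤ S := add_nonneg (supNormVec_nonneg _) (supAbs_nonneg _)
  set w : (Fin d → ℝ) → ℝ := fun x =>
    dens (fun x => ρ x - ρh x) x + dens (fun x => η x - ηh x) x with hw
  have hw0 : ∀ x, 0 ≤ w x := fun x => add_nonneg (dens_nonneg _ x) (dens_nonneg _ x)
  have hwc : Continuous w := (dens_cont (h1.sub h3)).add (dens_cont (h2.sub h4))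
  set X := Real.sqrt (h1sq fun x => ρ x - ρh x) with hX
  set Y := Real.sqrt (h1sq fun x => η x - ηh x) with hY
  have hX0 : 0 ≤ X := Real.sqrt_nonneg _
  have hY0 : 0 ≤ Y := Real.sqrt_nonneg _
  have hwi : ∫ x in cell d, w x = X ^ 2 + Y ^ 2 := by
    rw [hX, hY, Real.sq_sqrt (h1sq_nonneg' _), Real.sq_sqrt (h1sq_nonneg' _),
      h1sq_eq (h1.sub h3), h1sq_eq (h2.sub h4)]
    exact integral_add (int_cell (dens_cont (h1.sub h3))) (int_cell (dens_cont (h2.sub h4)))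
  have hlip : ∀ i j x, |L (mobArgs ρ η x) i j - L (mobArgs ρh ηh x) i j|
      ≤ CL * Real.sqrt (w x) := by
    intro i j x
    have := (convex_univ (𝕜 := ℝ) (E := Args d)).norm_image_sub_le_of_norm_fderiv_le
      (f := fun q => L q i j) (C := CL)
      (fun q _ => (hL i j).differentiable (by simp) q) (fun q _ => hL' q i j)
      (Set.mem_univ (mobArgs ρh ηh x)) (Set.mem_univ (mobArgs ρ η x))
    refine this.trans ?_
    exact mul_le_mul_of_nonneg_left (args_bound h1 h2 h3 h4 x) hCL.le
  set K := CL * ((d + 1) * S) with hK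
  have hK0 : 0 ≤ K := by positivity
  have hsq : ∀ (x : Fin d → ℝ) (a : Fin d → ℝ) (b : ℝ), x ∈ cell d →
      (∀ j, |a j| ≤ CL * Real.sqrt (w x)) → |b| ≤ CL * Real.sqrt (w x) →
      ((∑ j, a j * grad μρ x j) + b * μη x) ^ 2 ≤ K ^ 2 * w x := by
    intro x a b hx ha hb
    have := row_bound a (grad μρ x) b (μη x) (CL * Real.sqrt (w x)) _ _
      (by positivity) (supNormVec_nonneg (grad μρ)) (supAbs_nonneg μη) ha hb
      (fun j => abs_le_supNormVec (fun i => (grad_contDiff h5 i).continuous) hx j)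
      (abs_le_supAbs h6.continuous hx)
    rw [← sq_abs]
    refine (pow_le_pow_left₀ (abs_nonneg _) this 2).trans (le_of_eq ?_)
    rw [hK, hS]
    have := Real.sq_sqrt (hw0 x)
    linear_combination (CL * ((d + 1) * (supNormVec (grad μρ) + supAbs μη))) ^ 2 * this
  have hLc : ∀ i j, ContDiff ℝ (⊤ : ℕ∞) fun x => L (mobArgs ρ η x) i j := fun i j =>
    (hL i j).comp (mobArgs_contDiff h1 h2)
  have hLhc : ∀ i j, ContDiff ℝ (⊤ : ℕ∞) fun x => L (mobArgs ρh ηh x) i j := fun i j =>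
    (hL i j).comp (mobArgs_contDiff h3 h4)
  -- the second residual
  have hr3 : Real.sqrt (l2sq (res3 L ρ η ρh ηh μρ μη)) ≤ K * (X + Y) := by
    apply Real.sqrt_le_iff.2
    refine ⟨by positivity, ?_⟩
    have : l2sq (res3 L ρ η ρh ηh μρ μη) ≤ ∫ x in cell d, K ^ 2 * w x := by
      unfold l2sq
      refine setIntegral_mono_on (int_cell ?_) (int_cell (hwc.const_mul _))
        measurableSet_Icc fun x hx => ?_
      · unfold res3
        refine Continuous.pow (Continuous.add (continuous_finsetSum _ fun i _ => ?_) ?_) 2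
        · exact ((hLc _ _).sub (hLhc _ _)).continuous.mul (grad_contDiff h5 i).continuous
        · exact ((hLc _ _).sub (hLhc _ _)).continuous.mul h6.continuous
      · exact hsq x _ _ hx (fun j => hlip _ _ x) (hlip _ _ x)
    rw [integral_const_mul, hwi] at this
    nlinarith [mul_nonneg (sq_nonneg K) (mul_nonneg hX0 hY0)]
  -- the flux
  set F : (Fin d → ℝ) → Fin d → ℝ := fun y i =>
    (∑ j, (L (mobArgs ρh ηh y) (Sum.inl i) (Sum.inl j)
        - L (mobArgs ρ η y) (Sum.inl i) (Sum.inl j)) * grad μρ y j)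
    + (L (mobArgs ρh ηh y) (Sum.inl i) (Sum.inr ())
        - L (mobArgs ρ η y) (Sum.inl i) (Sum.inr ())) * μη y with hF
  have hFc : ∀ i, ContDiff ℝ (⊤ : ℕ∞) fun y => F y i := by
    intro i
    refine ContDiff.add (ContDiff.sum fun j _ => ?_) ?_
    · exact ((hLhc _ _).sub (hLc _ _)).mul (grad_contDiff h5 j)
    · exact ((hLhc _ _).sub (hLc _ _)).mul h6
  have hFp : ∀ i, ZPeriodic fun y => F y i := by
    intro i x k
    simp only [hF]
    rw [mobArgs_periodic p1 p2, mobArgs_periodic p3 p4, grad_periodic p5, p6]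
  have hFb : ∀ x ∈ cell d, ∑ i, F x i ^ 2 ≤ d * (K ^ 2 * w x) := by
    intro x hx
    refine (Finset.sum_le_card_nsmul _ _ (K ^ 2 * w x) fun i _ => ?_).trans (by simp)
    refine hsq x _ _ hx (fun j => ?_) ?_
    · rw [abs_sub_comm]; exact hlip _ _ x
    · rw [abs_sub_comm]; exact hlip _ _ x
  have hd1 : (1 : ℝ) ≤ d := by exact_mod_cast hd
  have hr1 : hneg1 (res1 L ρ η ρh ηh μρ μη) ≤ d * K * (X + Y) := by
    refine Real.sSup_le ?_ (by positivity)
    rintro c ⟨v, hv, pv, -, rfl⟩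
    refine div_le_of_le_mul₀ (Real.sqrt_nonneg _) (by positivity) ?_
    have hres : ∀ x, res1 L ρ η ρh ηh μρ μη x = divg F x := fun x => rfl
    have hdc : Continuous fun x => divg F x * v x :=
      (continuous_finsetSum _ fun i _ => (grad_contDiff (hFc i) i).continuous).mul hv.continuous
    have hFg : Continuous fun x => ∑ i, F x i * grad v x i :=
      continuous_finsetSum _ fun i _ => (hFc i).continuous.mul (grad_contDiff hv i).continuous
    have hibp := div_zero_int hd (fun i x => F x i * v x) (fun i => (hFc i).mul hv)
      (fun i x k => by
        have := hFp i x k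
        simp only at this ⊢
        rw [this, pv])
    have hexp : ∀ x, ∑ i, fderiv ℝ (fun x => F x i * v x) x (Pi.single i 1)
        = divg F x * v x + ∑ i, F x i * grad v x i := by
      intro x
      unfold divg grad
      rw [Finset.sum_mul, ← Finset.sum_add_distrib]
      refine Finset.sum_congr rfl fun i _ => ?_
      rw [fderiv_fun_mul ((hFc i).differentiable (by simp) x) (hv.differentiable (by simp) x)]
      simp
      ring
    simp only [hexp] at hibp
    rw [integral_add (int_cell hdc) (int_cell hFg)] at hibp
    simp only [hres]
    set B := ∫ x in cell d, divg F x * v x with hB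
    have hB' : B = -∫ x in cell d, ∑ i, F x i * grad v x i := by linarith
    have hq : B ^ 2 ≤ (d * (K ^ 2 * (X ^ 2 + Y ^ 2))) * h1sq v := by
      apply sq_le_of_quad
      intro t
      have e1 : 2 * t * B = ∫ x in cell d, -(2 * t) * ∑ i, F x i * grad v x i := by
        rw [integral_const_mul, hB']; ring
      have e2 : t ^ 2 * (d * (K ^ 2 * (X ^ 2 + Y ^ 2))) + h1sq v
          = ∫ x in cell d, (t ^ 2 * d * K ^ 2 * w x + dens v x) := by
        rw [integral_add (int_cell (hwc.const_mul _)) (int_cell (dens_cont hv)),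
          integral_const_mul, hwi, h1sq_eq hv]
        ring
      rw [e1, e2]
      refine setIntegral_mono_on (int_cell (hFg.const_mul _))
        (int_cell ((hwc.const_mul _).add (dens_cont hv))) measurableSet_Icc fun x hx => ?_
      have hy : -(2 * t) * ∑ i, F x i * grad v x i
          ≤ t ^ 2 * ∑ i, F x i ^ 2 + ∑ i, grad v x i ^ 2 := by
        rw [Finset.mul_sum, Finset.mul_sum, ← Finset.sum_add_distrib]
        refine Finset.sum_le_sum fun i _ => ?_
        nlinarith [sq_nonneg (t * F x i + grad v x i)]
      have := mul_le_mul_of_nonneg_left (hFb x hx) (sq_nonneg t)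
      unfold dens
      nlinarith [sq_nonneg (v x)]
    refine (le_abs_self B).trans (abs_le_of_sq_le_sq ?_ (by positivity))
    rw [mul_pow, Real.sq_sqrt (h1sq_nonneg' v)]
    refine hq.trans (mul_le_mul_of_nonneg_right ?_ (h1sq_nonneg' v))
    have a1 : X ^ 2 + Y ^ 2 ≤ (X + Y) ^ 2 := by
      have a0 := mul_nonneg hX0 hY0
      rw [add_sq]; linarith
    have a2 : (d : ℝ) ≤ d ^ 2 := le_self_pow₀ hd1 two_ne_zero
    calc (d : ℝ) * (K ^ 2 * (X ^ 2 + Y ^ 2)) ≤ d ^ 2 * (K ^ 2 * (X + Y) ^ 2) := by gcongr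
      _ = _ := by ring
  refine (add_le_add hr1 hr3).trans (le_of_eq ?_)
  rw [hK]
  ring
end
end
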